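/- arXiv:2508.15714 — 4 statements merged into one kernel-verified Lean document; each statement's English description precedes it below -/
import Mathlib

section
/- Let V be a complex vector space of dimension 2n with a nondegenerate symmetric bilinear form g. For each maximal isotropic subspace W ⊆ V, the map Λ^n W ⊗ Λ^n(V/W) → ℂ sending w_1∧⋯∧w_n ⊗ (v_1+W)∧⋯∧(v_n+W) to det(g(w_a, v_b))_{a,b} is an isomorphism, and composing it with the canonical isomorphism Λ^{2n}V ≅ Λ^n W ⊗ Λ^n(V/W) coming from the exact sequence 0 → W → V → V/W → 0 defines a framing α_W : Λ^{2n}V ≅ ℂ. If A is an orthogonal transformation of (V, g) (i.e., g(Ax, Ay) = g(x, y) for all x, y) carrying a maximal isotropic subspace W_1 onto a maximal isotropic subspace W_2, then α_{W_2} ∘ Λ^{2n}A = α_{W_1}, hence α_{W_2} = det(A)^{−1}·α_{W_1}; in particular, if det A = −1 then α_{W_1} = −α_{W_2}. -/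
/-!
Statement 2 (paper's Lemma "Volume form"):
Let `V` be a complex vector space of dimension `2n` with a nondegenerate symmetric
bilinear form `g`.  Each maximal isotropic subspace `W ⊆ V` induces a framing
`α_W : Λ^{2n} V ≅ ℂ`, characterized by
`α_W (w₁ ∧ ⋯ ∧ wₙ ∧ v₁ ∧ ⋯ ∧ vₙ) = det (g (w_a, v_b))` for `w_a ∈ W`, `v_b ∈ V`
(this is the composition of the canonical isomorphism
`Λ^{2n} V ≅ Λ^n W ⊗ Λ^n (V/W)` with the determinant pairing, which is an
isomorphism).  Such an `α_W` exists and is unique, and is bijective.  If `A` is an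
orthogonal transformation of `(V, g)` carrying a maximal isotropic `W₁` onto a
maximal isotropic `W₂`, then `α_{W₂} ∘ Λ^{2n} A = α_{W₁}`; in particular if
`det A = -1` then `α_{W₁} = -α_{W₂}`.
-/

open ExteriorAlgebra

noncomputable section

/-- The wedge `v₁ ∧ ⋯ ∧ vₙ`, as an element of the `n`-th exterior power `⋀[ℂ]^n V`. -/
def wedge {V : Type*} [AddCommGroup V] [Module ℂ V] (n : ℕ) (v : Fin n → V) :
    ↥(⋀[ℂ]^n V) :=
  ⟨ExteriorAlgebra.ιMulti ℂ n v, ExteriorAlgebra.ιMulti_range ℂ n (Set.mem_range_self v)⟩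

/-- `α` is the framing of `Λ^{2n} V` attached to the maximal isotropic subspace `W`:
it is the composition of the canonical isomorphism `Λ^{2n}V ≅ Λ^n W ⊗ Λ^n (V/W)` with
the pairing `Λ^n W ⊗ Λ^n (V/W) → ℂ`, `w₁∧⋯∧wₙ ⊗ v̄₁∧⋯∧v̄ₙ ↦ det (g (w_a, v_b))`;
equivalently, it takes the stated value on every wedge `w₁∧⋯∧wₙ∧v₁∧⋯∧vₙ` with the
`w_a` in `W`. -/
def IsFraming {V : Type*} [AddCommGroup V] [Module ℂ V] (n : ℕ)
    (g : V →ₗ[ℂ] V →ₗ[ℂ] ℂ) (W : Submodule ℂ V)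
    (α : ↥(⋀[ℂ]^(n + n) V) →ₗ[ℂ] ℂ) : Prop :=
  ∀ (w : Fin n → W) (v : Fin n → V),
    α (wedge (n + n) (Fin.append (fun a => ((w a : V))) v)) =
      Matrix.det (Matrix.of fun a b => g ((w a : V)) (v b))

/-!
Let `p : W × V/W → R` be the perfect pairing induced by `g`. A basis `c` of `W`, followed by lifts
to `V` of the `p`-dual basis of `V/W`, is a basis `b` of `V`. In these coordinates the family
`w₁, …, wₙ, v₁, …, vₙ` has a block triangular matrix, whose diagonal blocks are the coordinates of
the `w_a` in `c` and of the `v_b` in the dual basis. Its determinant is therefore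
`det (p (w_a, v_b))`, so `α_W` is the functional on `Λ²ⁿ V` corresponding to `b.det`.

Functionals on `Λ²ⁿ V` are determined by their value at the wedge of one basis. This gives
uniqueness of `α_W`, and also `α ∘ Λ²ⁿ A = det A • α` for every functional `α`. An orthogonal map
`A` with `A W₁ = W₂` pulls `α_{W₂}` back to a framing of `W₁`, hence to `α_{W₁}`.
-/

section TopExteriorPower

open Module

variable {R M : Type*} [CommRing R] [AddCommGroup M] [Module R M] {m : ℕ}
  {α β : ⋀[R]^m M →ₗ[R] R}

theorem apply_ιMulti_eq_mul_det (b : Basis (Fin m) R M) (α : ⋀[R]^m M →ₗ[R] R) (v : Fin m → M) :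
    α (exteriorPower.ιMulti R m v) = α (exteriorPower.ιMulti R m b) * b.det v :=
  DFunLike.congr_fun ((α.compAlternatingMap (exteriorPower.ιMulti R m)).eq_smul_basis_det b) v

theorem eq_of_apply_ιMulti_basis_eq (b : Basis (Fin m) R M)
    (h : α (exteriorPower.ιMulti R m b) = β (exteriorPower.ιMulti R m b)) : α = β := by
  ext v
  simp only [LinearMap.compAlternatingMap_apply]
  rw [apply_ιMulti_eq_mul_det b α, apply_ιMulti_eq_mul_det b β, h]

theorem comp_exteriorPowerMap_eq_det_smul (b : Basis (Fin m) R M) (α : ⋀[R]^m M →ₗ[R] R)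
    (f : M →ₗ[R] M) : α ∘ₗ exteriorPower.map m f = LinearMap.det f • α := by
  apply eq_of_apply_ιMulti_basis_eq b
  calc α (exteriorPower.map m f (exteriorPower.ιMulti R m b))
      = α (exteriorPower.ιMulti R m (f ∘ b)) := by rw [exteriorPower.map_apply_ιMulti]
    _ = α (exteriorPower.ιMulti R m b) * b.det (f ∘ b) := apply_ιMulti_eq_mul_det b α _
    _ = LinearMap.det f * α (exteriorPower.ιMulti R m b) := by
        rw [b.det_comp, b.det_self, mul_one, mul_comm]

theorem bijective_of_surjective_topExteriorPower (b : Basis (Fin m) R M)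
    (hα : Function.Surjective α) : Function.Bijective α := by
  obtain _ | _ := subsingleton_or_nontrivial R
  · have := Module.subsingleton R (⋀[R]^m M)
    exact ⟨Function.injective_of_subsingleton α, hα⟩
  have := Module.Finite.of_basis b
  have := Module.Free.of_basis b
  refine OrzechProperty.bijective_of_surjective_of_finrank_le α hα ?_
  rw [exteriorPower.finrank_eq, finrank_eq_card_basis b, Fintype.card_fin, Nat.choose_self,
    finrank_self]

end TopExteriorPower

section AdaptedBasis

open Module

variable {R V : Type*} [CommRing R] [AddCommGroup V] [Module R V] {W : Submodule R V}

theorem det_sumQuot_sumElim {ι κ : Type*} [Fintype ι] [Fintype κ] [DecidableEq ι] [DecidableEq κ]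
    (c : Basis ι R W) (q : Basis κ R (V ⧸ W)) (w : ι → W) (v : κ → V) :
    (c.sumQuot q).det (Sum.elim (fun a => (w a : V)) v) = c.det w * q.det (W.mkQ ∘ v) := by
  have hblocks : (c.sumQuot q).toMatrix (Sum.elim (fun a => (w a : V)) v) =
      Matrix.fromBlocks (c.toMatrix w) (Matrix.of fun i b => (c.sumQuot q).repr (v b) (Sum.inl i))
        0 (q.toMatrix (W.mkQ ∘ v)) := by
    ext (i | i) (j | j) <;> simp [Basis.toMatrix_apply, (Submodule.Quotient.mk_eq_zero W).2]
  rw [Basis.det_apply, hblocks, Matrix.det_fromBlocks_zero₂₁, Basis.det_apply, Basis.det_apply]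

variable {m k : ℕ} (c : Basis (Fin m) R W) (q : Basis (Fin k) R (V ⧸ W))

/-- The basis of `V` consisting of a basis `c` of `W` followed by lifts of a basis `q` of `V ⧸ W`:
`Module.Basis.sumQuot`, indexed by `Fin (m + k)` so that its members can be wedged in order. -/
def adaptedBasis : Basis (Fin (m + k)) R V :=
  (c.sumQuot q).reindex finSumFinEquiv

theorem coe_adaptedBasis :
    ⇑(adaptedBasis c q) =
      Fin.append (fun i => (c i : V)) (fun j => c.sumQuot q (Sum.inr j)) := by
  ext i
  refine Fin.addCases (fun i => ?_) (fun j => ?_) i <;>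
    simp [adaptedBasis, -Fin.natAdd_eq_addNat]

theorem det_adaptedBasis_append (w : Fin m → W) (v : Fin k → V) :
    (adaptedBasis c q).det (Fin.append (fun a => (w a : V)) v) =
      c.det w * q.det (W.mkQ ∘ v) := by
  rw [adaptedBasis, Basis.det_reindex, ← det_sumQuot_sumElim, ← Fin.append_comp_sumElim]
  congr

end AdaptedBasis

section PerfectPairing

open Module

variable {R M N ι : Type*} [CommRing R] [AddCommGroup M] [Module R M] [AddCommGroup N] [Module R N]
  [Fintype ι] [DecidableEq ι] (p : M →ₗ[R] N →ₗ[R] R) [p.IsPerfPair] (c : Basis ι R M)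

/-- The basis of `N` dual to the basis `c` of `M` under a perfect pairing `p` of `M` and `N`. -/
def perfPairDualBasis : Basis ι R N :=
  c.dualBasis.map p.flip.toPerfPair.symm

theorem perfPairDualBasis_repr (y : N) (i : ι) : (perfPairDualBasis p c).repr y i = p (c i) y := by
  simp [perfPairDualBasis]

theorem det_perfPair (x : ι → M) (y : ι → N) :
    (Matrix.of fun a b => p (x a) (y b)).det = c.det x * (perfPairDualBasis p c).det y := by
  have hmul : (Matrix.of fun a b => p (x a) (y b)) =
      (c.toMatrix x).transpose * (perfPairDualBasis p c).toMatrix y := by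
    ext a b
    have hexpand : p (x a) (y b) = ∑ i, c.repr (x a) i * p (c i) (y b) := by
      conv_lhs => rw [← c.sum_repr (x a)]
      simp only [map_sum, map_smul, LinearMap.sum_apply, LinearMap.smul_apply, smul_eq_mul]
    simpa [Matrix.mul_apply, Basis.toMatrix_apply, perfPairDualBasis_repr] using hexpand
  rw [hmul, Matrix.det_mul, Matrix.det_transpose, Basis.det_apply, Basis.det_apply]

end PerfectPairing

section Framing

open Module

variable {R V V' : Type*} [CommRing R] [AddCommGroup V] [Module R V] [AddCommGroup V'] [Module R V']

/-- The notion `IsFraming` over an arbitrary commutative ring. The submodule `W` enters as the left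
argument of `g`, which matters when `g` is not symmetric. -/
def IsFramingOver (n : ℕ) (g : V →ₗ[R] V →ₗ[R] R) (W : Submodule R V)
    (α : ⋀[R]^(n + n) V →ₗ[R] R) : Prop :=
  ∀ (w : Fin n → W) (v : Fin n → V),
    α (exteriorPower.ιMulti R (n + n) (Fin.append (fun a => (w a : V)) v)) =
      (Matrix.of fun a b => g (w a) (v b)).det

/-- `W` is totally isotropic for the bilinear form `g`, so that `g` descends to a pairing of `W`
with `V ⧸ W`. -/
def IsTotallyIsotropic (g : V →ₗ[R] V →ₗ[R] R) (W : Submodule R V) : Prop :=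
  ∀ w ∈ W, ∀ w' ∈ W, g w w' = 0

/-- The pairing of `W` with `V ⧸ W` induced by a bilinear form `g` for which `W` is totally
isotropic. -/
def isotropicPairing {g : V →ₗ[R] V →ₗ[R] R} {W : Submodule R V} (hW : IsTotallyIsotropic g W) :
    W →ₗ[R] (V ⧸ W) →ₗ[R] R :=
  (W.liftQ (g.domRestrict W).flip fun w' hw' =>
    LinearMap.ext fun w => hW w w.2 w' hw').flip

variable {n : ℕ} {g : V →ₗ[R] V →ₗ[R] R} {W : Submodule R V}

theorem IsFramingOver.unique {α β : ⋀[R]^(n + n) V →ₗ[R] R} (hα : IsFramingOver n g W α)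
    (hβ : IsFramingOver n g W β) (c : Basis (Fin n) R W) (q : Basis (Fin n) R (V ⧸ W)) :
    α = β := by
  apply eq_of_apply_ιMulti_basis_eq (adaptedBasis c q)
  rw [coe_adaptedBasis, hα, hβ]

theorem IsFramingOver.comp_map {g' : V' →ₗ[R] V' →ₗ[R] R} {W' : Submodule R V'}
    {α : ⋀[R]^(n + n) V' →ₗ[R] R} (hα : IsFramingOver n g' W' α) (f : V →ₗ[R] V')
    (hf : ∀ w ∈ W, ∀ y, g' (f w) (f y) = g w y) (hfW : W.map f ≤ W') :
    IsFramingOver n g W (α ∘ₗ exteriorPower.map (n + n) f) := by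
  intro w v
  have hfw (a : Fin n) : f (w a) ∈ W' := hfW (Submodule.mem_map_of_mem (w a).2)
  have happend : f ∘ Fin.append (fun a => (w a : V)) v =
      Fin.append (fun a => f (w a)) (f ∘ v) := by
    ext i
    refine Fin.addCases (fun a => ?_) (fun b => ?_) i <;> simp [-Fin.natAdd_eq_addNat]
  rw [LinearMap.comp_apply, exteriorPower.map_apply_ιMulti, happend]
  refine (hα (fun a => ⟨f (w a), hfw a⟩) (f ∘ v)).trans ?_
  simp only [Function.comp_apply, hf _ (w _).2]

/-- The basis of `V` formed by a basis `c` of a totally isotropic submodule `W` and lifts of its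
dual basis in `V ⧸ W`; its determinant is the framing attached to `W`. -/
def isotropicBasis (hW : IsTotallyIsotropic g W) [(isotropicPairing hW).IsPerfPair]
    (c : Basis (Fin n) R W) : Basis (Fin (n + n)) R V :=
  adaptedBasis c (perfPairDualBasis (isotropicPairing hW) c)

theorem isFramingOver_alternatingMapLinearEquiv_det (hW : IsTotallyIsotropic g W)
    [(isotropicPairing hW).IsPerfPair] (c : Basis (Fin n) R W) :
    IsFramingOver n g W (exteriorPower.alternatingMapLinearEquiv (isotropicBasis hW c).det) := by
  intro w v
  rw [exteriorPower.alternatingMapLinearEquiv_apply_ιMulti, isotropicBasis,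
    det_adaptedBasis_append, ← det_perfPair]
  rfl

theorem IsFramingOver.eq_alternatingMapLinearEquiv_det {α : ⋀[R]^(n + n) V →ₗ[R] R}
    (hα : IsFramingOver n g W α) (hW : IsTotallyIsotropic g W) [(isotropicPairing hW).IsPerfPair]
    (c : Basis (Fin n) R W) :
    α = exteriorPower.alternatingMapLinearEquiv (isotropicBasis hW c).det :=
  hα.unique (isFramingOver_alternatingMapLinearEquiv_det hW c) c
    (perfPairDualBasis (isotropicPairing hW) c)

theorem existsUnique_isFramingOver (hW : IsTotallyIsotropic g W) [(isotropicPairing hW).IsPerfPair]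
    (c : Basis (Fin n) R W) :
    ∃! α : ⋀[R]^(n + n) V →ₗ[R] R, IsFramingOver n g W α :=
  ⟨_, isFramingOver_alternatingMapLinearEquiv_det hW c,
    fun _ hα => hα.eq_alternatingMapLinearEquiv_det hW c⟩

theorem IsFramingOver.bijective {α : ⋀[R]^(n + n) V →ₗ[R] R} (hα : IsFramingOver n g W α)
    (hW : IsTotallyIsotropic g W) [(isotropicPairing hW).IsPerfPair]
    (c : Basis (Fin n) R W) : Function.Bijective α := by
  have hone : α (exteriorPower.ιMulti R (n + n) (isotropicBasis hW c)) = 1 := by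
    rw [hα.eq_alternatingMapLinearEquiv_det hW c,
      exteriorPower.alternatingMapLinearEquiv_apply_ιMulti, Basis.det_self]
  exact bijective_of_surjective_topExteriorPower (isotropicBasis hW c)
    fun r => ⟨r • _, by rw [map_smul, hone, smul_eq_mul, mul_one]⟩

end Framing

section Field

open Module

variable {K V : Type*} [Field K] [AddCommGroup V] [Module K V] [FiniteDimensional K V] {n : ℕ}

theorem finrank_quotient_of_finrank_eq_add {m k : ℕ} (hdim : finrank K V = m + k)
    {W : Submodule K V} (hm : finrank K W = m) : finrank K (V ⧸ W) = k := by
  have := W.finrank_quotient_add_finrank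
  lia

theorem isPerfPair_isotropicPairing (hdim : finrank K V = n + n) {g : V →ₗ[K] V →ₗ[K] K}
    (hg : g.SeparatingLeft) {W : Submodule K V} (hW : IsTotallyIsotropic g W)
    (hn : finrank K W = n) : (isotropicPairing hW).IsPerfPair := by
  have hinj : Function.Injective (isotropicPairing hW) := by
    refine (injective_iff_map_eq_zero _).2 fun w hw => Subtype.ext (hg w fun v => ?_)
    exact LinearMap.congr_fun hw (W.mkQ v)
  have hrank : finrank K W = finrank K (Dual K (V ⧸ W)) := by
    rw [Subspace.dual_finrank_eq, finrank_quotient_of_finrank_eq_add hdim hn, hn]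
  exact .of_bijective _
    ⟨hinj, (LinearMap.injective_iff_surjective_of_finrank_eq_finrank hrank).1 hinj⟩

theorem framing_of_maximal_isotropic_general (hdim : finrank K V = n + n)
    (g : V →ₗ[K] V →ₗ[K] K) (hg : g.SeparatingLeft) :
    (∀ W : Submodule K V, IsTotallyIsotropic g W → finrank K W = n →
      ∃! α : ⋀[K]^(n + n) V →ₗ[K] K, IsFramingOver n g W α) ∧
    (∀ W : Submodule K V, IsTotallyIsotropic g W → finrank K W = n →
      ∀ α : ⋀[K]^(n + n) V →ₗ[K] K, IsFramingOver n g W α → Function.Bijective α) ∧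
    (∀ W₁ W₂ : Submodule K V, finrank K W₁ = n →
      ∀ α₁ α₂ : ⋀[K]^(n + n) V →ₗ[K] K, IsFramingOver n g W₁ α₁ → IsFramingOver n g W₂ α₂ →
        ∀ A : V →ₗ[K] V, (∀ w ∈ W₁, ∀ y, g (A w) (A y) = g w y) → W₁.map A ≤ W₂ →
          (∀ u, α₂ (exteriorPower.ιMulti K (n + n) (A ∘ u)) =
            α₁ (exteriorPower.ιMulti K (n + n) u)) ∧ α₁ = LinearMap.det A • α₂) := by
  refine ⟨fun W hW hn => ?_, fun W hW hn α hα => ?_, fun W₁ W₂ hn α₁ α₂ hα₁ hα₂ A hA hAW => ?_⟩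
  · have := isPerfPair_isotropicPairing hdim hg hW hn
    exact existsUnique_isFramingOver hW (finBasisOfFinrankEq K W hn)
  · have := isPerfPair_isotropicPairing hdim hg hW hn
    exact hα.bijective hW (finBasisOfFinrankEq K W hn)
  · have hcomp : α₂ ∘ₗ exteriorPower.map (n + n) A = α₁ :=
      (hα₂.comp_map A hA hAW).unique hα₁ (finBasisOfFinrankEq K W₁ hn)
        (finBasisOfFinrankEq K _ (finrank_quotient_of_finrank_eq_add hdim hn))
    refine ⟨fun u => ?_, hcomp ▸ ?_⟩
    · rw [← hcomp, LinearMap.comp_apply, exteriorPower.map_apply_ιMulti]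
    · exact comp_exteriorPowerMap_eq_det_smul (finBasisOfFinrankEq K V hdim) α₂ A

end Field

theorem framing_of_maximal_isotropic
    (n : ℕ) (V : Type*) [AddCommGroup V] [Module ℂ V] [FiniteDimensional ℂ V]
    (hdim : Module.finrank ℂ V = n + n)
    (g : V →ₗ[ℂ] V →ₗ[ℂ] ℂ)
    (hsymm : ∀ x y : V, g x y = g y x)
    (hnondeg : ∀ v : V, (∀ w : V, g v w = 0) → v = 0) :
    -- (1) every maximal isotropic subspace `W` determines a unique framing `α_W`,
    (∀ W : Submodule ℂ V,
      (∀ w ∈ W, ∀ w' ∈ W, g w w' = 0) → Module.finrank ℂ W = n →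
      ∃! α : ↥(⋀[ℂ]^(n + n) V) →ₗ[ℂ] ℂ, IsFraming n g W α)
    ∧
    -- (2) any such framing is an isomorphism `Λ^{2n} V ≅ ℂ`,
    (∀ W : Submodule ℂ V,
      (∀ w ∈ W, ∀ w' ∈ W, g w w' = 0) → Module.finrank ℂ W = n →
      ∀ α : ↥(⋀[ℂ]^(n + n) V) →ₗ[ℂ] ℂ, IsFraming n g W α →
        Function.Bijective α)
    ∧
    -- (3) if `A` is orthogonal for `g` and maps the maximal isotropic `W₁` onto the
    -- maximal isotropic `W₂`, then `α_{W₂} ∘ Λ^{2n} A = α_{W₁}` (checked on the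
    -- spanning wedges `u₁ ∧ ⋯ ∧ u_{2n} ↦ A u₁ ∧ ⋯ ∧ A u_{2n}`), and if moreover
    -- `det A = -1` then `α_{W₁} = -α_{W₂}`.
    (∀ (W₁ W₂ : Submodule ℂ V),
      (∀ w ∈ W₁, ∀ w' ∈ W₁, g w w' = 0) → Module.finrank ℂ W₁ = n →
      (∀ w ∈ W₂, ∀ w' ∈ W₂, g w w' = 0) → Module.finrank ℂ W₂ = n →
      ∀ α₁ α₂ : ↥(⋀[ℂ]^(n + n) V) →ₗ[ℂ] ℂ,
        IsFraming n g W₁ α₁ → IsFraming n g W₂ α₂ →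
        ∀ A : V ≃ₗ[ℂ] V,
          (∀ x y : V, g (A x) (A y) = g x y) →
          W₁.map (A : V →ₗ[ℂ] V) = W₂ →
          (∀ u : Fin (n + n) → V,
            α₂ (wedge (n + n) (fun k => A (u k))) = α₁ (wedge (n + n) u))
          ∧ (LinearMap.det (A : V →ₗ[ℂ] V) = -1 → α₁ = -α₂)) := by
  obtain ⟨hunique, hbij, hcomp⟩ := framing_of_maximal_isotropic_general hdim g hnondeg
  exact ⟨hunique, hbij, fun W₁ W₂ _ hn₁ _ _ α₁ α₂ hα₁ hα₂ A hA hAW =>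
    (hcomp W₁ W₂ hn₁ α₁ α₂ hα₁ hα₂ A (fun w _ => hA w) hAW.le).imp_right
      fun hdet hA' => by rw [hdet, hA', neg_one_smul]⟩

end
end

section
/- Let m ≥ 1 and let V be a complex vector space of dimension 4m equipped with a nondegenerate symmetric bilinear form g and a linear endomorphism e satisfying g(e x, y) + g(x, e y) = 0 for all x, y ∈ V, e^{2m} = 0, and dim ker e = 2 (so e is nilpotent of Jordan type [2m, 2m]). Suppose K_1 and K_2 are subspaces of V such that, for s = 1, 2, K_s is spanned by v_s, e v_s, …, e^{2m−1} v_s for some vector v_s ∈ V, dim K_s = 2m, and g vanishes identically on K_s × K_s (i.e., K_s is maximal isotropic). Then dim(K_1 ∩ K_2) is even. -/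
/-!
Write `N = 2m`, `d = dim (K₁ ∩ K₂)` and `k = N - d`, and assume `d > 0`. On a subspace consisting of
a single Jordan block the invariant subspaces form a chain, so `K₁ ∩ K₂ = Kₛ ∩ ker eᵈ = eᵏ Kₛ` for
`s = 1, 2`. In particular `eᵏ v₁ = eᵏ y` for some `y ∈ K₂`; put `u = y - v₁`. Suppose `k` is odd.
The form `g(x, eᵏ⁻¹ z)` is then symmetric, and `g(u, eᵏ⁻¹ u) = 0` because `u ∈ ker eᵏ` while
`eᵏ⁻¹ u ∈ ker e ⊆ range eᵏ`, as `k < N`. Expanding `g(y, eᵏ⁻¹ y) = 0` gives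
`2 g(v₁, eᵏ⁻¹ u) = 0`, which puts `eᵏ⁻¹ u` in `K₁ᗮ ∩ ker e = K₁ ∩ ker e ⊆ K₂`. Hence
`eᵏ⁻¹ v₁ = eᵏ⁻¹ y - eᵏ⁻¹ u` lies in `K₁ ∩ K₂ ⊆ ker eᵈ`, contradicting `eᴺ⁻¹ v₁ ≠ 0`.
-/

open Module LinearMap

section NilpotentSkewAdjoint

variable {F V : Type*} [Field F] [AddCommGroup V] [Module F V]

section InvariantSubspaces

variable {e : End F V} {K S : Submodule F V}

variable [FiniteDimensional F V]

lemma finrank_map_add_finrank_inf_ker (f : End F V) (K : Submodule F V) :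
    finrank F (K.map f) + finrank F ↥(K ⊓ ker f) = finrank F K := by
  rw [← finrank_range_add_finrank_ker (f.domRestrict K), range_domRestrict, ker_domRestrict,
    ← Submodule.map_comap_subtype, Submodule.finrank_map_subtype_eq]

lemma finrank_inf_ker_pow_le (hK : K ∈ e.invtSubmodule) (n : ℕ) :
    finrank F ↥(K ⊓ ker (e ^ n)) ≤ n * finrank F ↥(K ⊓ ker e) := by
  induction n with
  | zero => simp [End.one_eq_id]
  | succ n ih =>
    have hmap : (K ⊓ ker (e ^ (n + 1))).map (e ^ n) ≤ K ⊓ ker e := by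
      rintro _ ⟨x, ⟨hxK, hx⟩, rfl⟩
      refine ⟨End.pow_apply_mem_of_forall_mem n hK x hxK, ?_⟩
      change e ((e ^ n) x) = 0
      rwa [← End.mul_apply, ← pow_succ']
    have hker : K ⊓ ker (e ^ (n + 1)) ⊓ ker (e ^ n) ≤ K ⊓ ker (e ^ n) :=
      inf_le_inf_right _ inf_le_left
    have := finrank_map_add_finrank_inf_ker (e ^ n) (K ⊓ ker (e ^ (n + 1)))
    have := Submodule.finrank_mono hmap
    have := Submodule.finrank_mono hker
    rw [add_one_mul]
    lia

lemma ker_le_range_pow {N n : ℕ} (hn : n < N) (hdim : finrank F V = N * finrank F (ker e))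
    (hnil : e ^ N = 0) : ker e ≤ range (e ^ n) := by
  obtain ⟨M, rfl⟩ : ∃ M, N = M + 1 := ⟨N - 1, by lia⟩
  have hrange : range (e ^ M) = ker e := by
    refine Submodule.eq_of_le_of_finrank_le ?_ ?_
    · rw [range_le_ker_iff, ← End.mul_eq_comp, ← pow_succ', hnil]
    · have hker := finrank_inf_ker_pow_le (e := e) (K := ⊤) (End.invtSubmodule.top_mem e) M
      rw [top_inf_eq, top_inf_eq] at hker
      have := finrank_range_add_finrank_ker (e ^ M)
      rw [add_one_mul] at hdim
      lia
  rw [← hrange, ← Nat.add_sub_of_le (Nat.lt_succ_iff.1 hn), pow_add]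
  exact range_comp_le_range _ _

lemma le_ker_pow_finrank (hS : S ∈ e.invtSubmodule) (hnil : IsNilpotent e) :
    S ≤ ker (e ^ finrank F S) := by
  intro x hx
  obtain ⟨N, hN⟩ := hnil
  have hpow (n : ℕ) : (⟨x, hx⟩ : S) ∈ ker (e.restrict hS ^ n) ↔ (e ^ n) x = 0 := by
    rw [End.pow_restrict n hS, mem_ker, Subtype.ext_iff]
    rfl
  exact (hpow _).1 (End.ker_pow_le_ker_pow_finrank _ N ((hpow N).2 (by simp [hN])))

theorem eq_inf_ker_pow_finrank (hK : K ∈ e.invtSubmodule)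
    (hblock : finrank F ↥(K ⊓ ker e) ≤ 1) (hnil : IsNilpotent e) (hS : S ∈ e.invtSubmodule)
    (hSK : S ≤ K) : S = K ⊓ ker (e ^ finrank F S) :=
  Submodule.eq_of_le_of_finrank_le (le_inf hSK (le_ker_pow_finrank hS hnil)) <|
    (finrank_inf_ker_pow_le hK _).trans (mul_le_of_le_one_right' hblock)

lemma inf_ker_le_of_finrank_inf_ker_le_one (hK : K ∈ e.invtSubmodule)
    (hblock : finrank F ↥(K ⊓ ker e) ≤ 1) (hnil : IsNilpotent e) (hS : S ∈ e.invtSubmodule)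
    (hSK : S ≤ K) (hne : S ≠ ⊥) : K ⊓ ker e ≤ S := by
  rw [eq_inf_ker_pow_finrank hK hblock hnil hS hSK]
  refine inf_le_inf_left K fun x hx =>
    End.pow_map_zero_of_le (Submodule.one_le_finrank_iff.2 hne) ?_
  rwa [pow_one]

theorem map_pow_eq_inf_ker_pow (hK : K ∈ e.invtSubmodule)
    (hblock : finrank F ↥(K ⊓ ker e) ≤ 1) (hnil : IsNilpotent e) {n : ℕ} (hn : n ≤ finrank F K) :
    K.map (e ^ n) = K ⊓ ker (e ^ (finrank F K - n)) := by
  have hker (k : ℕ) : finrank F ↥(K ⊓ ker (e ^ k)) ≤ k :=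
    (finrank_inf_ker_pow_le hK k).trans (mul_le_of_le_one_right' hblock)
  refine Submodule.eq_of_le_of_finrank_le ?_ ?_
  · rintro _ ⟨x, hx, rfl⟩
    refine ⟨End.pow_apply_mem_of_forall_mem n hK x hx, ?_⟩
    change (e ^ (finrank F K - n)) ((e ^ n) x) = 0
    rw [← End.mul_apply, ← pow_add, Nat.sub_add_cancel hn]
    exact le_ker_pow_finrank hK hnil hx
  · have := finrank_map_add_finrank_inf_ker (e ^ n) K
    have := hker n
    have := hker (finrank F K - n)
    lia

end InvariantSubspaces

/-- The Krylov subspace spanned by `v, e v, …, e ^ (N - 1) v`. When `e ^ N = 0` it is the cyclic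
subspace generated by `v`. -/
def krylovSubspace (e : End F V) (v : V) (N : ℕ) : Submodule F V :=
  Submodule.span F (Set.range fun k : Fin N => (e ^ (k : ℕ)) v)

namespace krylovSubspace

variable {e : End F V} {v : V} {N : ℕ}

lemma pow_apply_mem {k : ℕ} (hk : k < N) : (e ^ k) v ∈ krylovSubspace e v N :=
  Submodule.subset_span ⟨⟨k, hk⟩, rfl⟩

lemma mem_invtSubmodule (hv : (e ^ N) v = 0) : krylovSubspace e v N ∈ e.invtSubmodule := by
  rw [End.mem_invtSubmodule]
  refine Submodule.span_le.2 ?_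
  rintro _ ⟨k, rfl⟩
  change e ((e ^ (k : ℕ)) v) ∈ krylovSubspace e v N
  rw [← End.mul_apply, ← pow_succ']
  obtain hk | hk := (Nat.succ_le_of_lt k.isLt).lt_or_eq
  · exact pow_apply_mem hk
  · rw [← Nat.succ_eq_add_one, hk, hv]
    exact zero_mem _

lemma le_span_singleton_sup_map :
    krylovSubspace e v N ≤ Submodule.span F {v} ⊔ (krylovSubspace e v N).map e := by
  refine Submodule.span_le.2 ?_
  rintro _ ⟨⟨_ | k, hk⟩, rfl⟩
  · exact Submodule.mem_sup_left (Submodule.mem_span_singleton_self v)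
  · refine Submodule.mem_sup_right ⟨(e ^ k) v, pow_apply_mem (by lia), ?_⟩
    rw [← End.mul_apply, ← pow_succ']

lemma pow_apply_ne_zero (hdim : finrank F (krylovSubspace e v N) = N) {k : ℕ} (hk : k < N) :
    (e ^ k) v ≠ 0 := by
  have hindep : LinearIndependent F fun k : Fin N => (e ^ (k : ℕ)) v :=
    linearIndependent_iff_card_eq_finrank_span.2 ((Fintype.card_fin N).trans hdim.symm)
  exact hindep.ne_zero ⟨k, hk⟩

variable [FiniteDimensional F V]

lemma finrank_inf_ker_le_one : finrank F ↥(krylovSubspace e v N ⊓ ker e) ≤ 1 := by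
  have hsup := Submodule.finrank_mono (le_span_singleton_sup_map (e := e) (v := v) (N := N))
  have hadd := Submodule.finrank_add_le_finrank_add_finrank (Submodule.span F {v})
    ((krylovSubspace e v N).map e)
  have hv := finrank_span_le_card (R := F) {v}
  rw [Set.toFinset_singleton, Finset.card_singleton] at hv
  have := finrank_map_add_finrank_inf_ker e (krylovSubspace e v N)
  lia

lemma pow_apply_mem_iff_of_mem_invtSubmodule (hnil : e ^ N = 0)
    (hdim : finrank F (krylovSubspace e v N) = N) {S : Submodule F V} (hS : S ∈ e.invtSubmodule)
    (hSK : S ≤ krylovSubspace e v N) {n : ℕ} : (e ^ n) v ∈ S ↔ N ≤ finrank F S + n := by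
  have hchain := eq_inf_ker_pow_finrank (mem_invtSubmodule (by rw [hnil, LinearMap.zero_apply]))
    finrank_inf_ker_le_one ⟨N, hnil⟩ hS hSK
  have hadd : (e ^ finrank F S) ((e ^ n) v) = (e ^ (finrank F S + n)) v := by
    rw [pow_add, End.mul_apply]
  constructor
  · intro hmem
    by_contra! hlt
    exact pow_apply_ne_zero hdim hlt (hadd ▸ (hchain.le hmem).2)
  · intro hle
    have hzero : (e ^ (finrank F S + n)) v = 0 := by
      rw [pow_eq_zero_of_le hle hnil, LinearMap.zero_apply]
    obtain hn | hn := lt_or_ge n N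
    · exact hchain.ge ⟨pow_apply_mem hn, hadd.trans hzero⟩
    · rw [pow_eq_zero_of_le hn hnil, LinearMap.zero_apply]
      exact zero_mem S

lemma exists_mem_pow_apply_eq (hnil : e ^ N = 0) (hdim : finrank F (krylovSubspace e v N) = N)
    {n : ℕ} (hn : n ≤ N) {w : V} (hw : (e ^ n) w ∈ krylovSubspace e v N) :
    ∃ y ∈ krylovSubspace e v N, (e ^ n) y = (e ^ n) w := by
  have hmap := map_pow_eq_inf_ker_pow (mem_invtSubmodule (by rw [hnil, LinearMap.zero_apply]))
    finrank_inf_ker_le_one ⟨N, hnil⟩ (hn.trans_eq hdim.symm)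
  refine hmap.ge ⟨hw, ?_⟩
  change (e ^ (finrank F (krylovSubspace e v N) - n)) ((e ^ n) w) = 0
  rw [hdim, ← End.mul_apply, ← pow_add, Nat.sub_add_cancel hn, hnil, LinearMap.zero_apply]

end krylovSubspace

section SkewAdjoint

variable {g : LinearMap.BilinForm F V} {e : End F V}

lemma apply_pow_left_of_isSkewAdjoint (hskew : g.IsSkewAdjoint e) (n : ℕ) (x y : V) :
    g ((e ^ n) x) y = (-1) ^ n * g x ((e ^ n) y) := by
  induction n generalizing x with
  | zero => simp
  | succ n ih =>
    have hleft : (e ^ (n + 1)) x = (e ^ n) (e x) := by rw [pow_succ, End.mul_apply]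
    have hright : (e ^ (n + 1)) y = e ((e ^ n) y) := by rw [pow_succ', End.mul_apply]
    have hstep : g (e x) ((e ^ n) y) = -g x (e ((e ^ n) y)) := by
      rw [hskew, Pi.neg_apply, map_neg]
    rw [hleft, hright, ih, hstep]
    ring

lemma apply_pow_comm_of_even (hsymm : g.IsSymm) (hskew : g.IsSkewAdjoint e) {n : ℕ}
    (hn : Even n) (x y : V) : g x ((e ^ n) y) = g y ((e ^ n) x) := by
  rw [← hsymm.eq, apply_pow_left_of_isSkewAdjoint hskew, hn.neg_one_pow, one_mul]

lemma apply_pow_sub_eq_zero_of_even [NeZero (2 : F)] (hsymm : g.IsSymm) (hskew : g.IsSkewAdjoint e)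
    {n : ℕ} (hn : Even n) {x y : V} (hx : g x ((e ^ n) x) = 0) (hy : g y ((e ^ n) y) = 0)
    (hsub : g (y - x) ((e ^ n) (y - x)) = 0) : g x ((e ^ n) (y - x)) = 0 := by
  have hcomm := apply_pow_comm_of_even hsymm hskew hn x y
  simp only [map_sub, LinearMap.sub_apply, hx, hy] at hsub ⊢
  rw [sub_zero]
  exact (mul_eq_zero_iff_left (NeZero.ne (2 : F))).1 (by linear_combination -hsub + hcomm)

lemma apply_eq_zero_of_mem_ker_pow_of_mem_range_pow (hskew : g.IsSkewAdjoint e) {n : ℕ} {x y : V}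
    (hx : x ∈ ker (e ^ n)) (hy : y ∈ range (e ^ n)) : g x y = 0 := by
  obtain ⟨z, rfl⟩ := hy
  have h := apply_pow_left_of_isSkewAdjoint hskew n x z
  rw [mem_ker.1 hx, map_zero, LinearMap.zero_apply] at h
  exact (mul_eq_zero_iff_left (pow_ne_zero n (neg_ne_zero.2 one_ne_zero))).1 h.symm

lemma mem_orthogonal_krylovSubspace_of_mem_ker (hskew : g.IsSkewAdjoint e) {v x : V} (N : ℕ)
    (hx : x ∈ ker e) (hvx : g v x = 0) : x ∈ g.orthogonal (krylovSubspace e v N) := by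
  suffices krylovSubspace e v N ≤ ker (g.flip x) from fun y hy => this hy
  refine Submodule.span_le.2 ?_
  rintro _ ⟨⟨_ | k, hk⟩, rfl⟩
  · exact hvx
  · change g ((e ^ (k + 1)) v) x = 0
    rw [apply_pow_left_of_isSkewAdjoint hskew, pow_succ e, End.mul_apply, mem_ker.1 hx,
      map_zero, map_zero, mul_zero]

end SkewAdjoint

lemma orthogonal_eq_self_of_le_of_finrank_eq [FiniteDimensional F V] {g : LinearMap.BilinForm F V}
    (hnondeg : g.Nondegenerate) {K : Submodule F V} (hiso : K ≤ g.orthogonal K)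
    (hdim : finrank F V = 2 * finrank F K) : g.orthogonal K = K := by
  refine (Submodule.eq_of_le_of_finrank_eq hiso ?_).symm
  rw [LinearMap.BilinForm.finrank_orthogonal hnondeg]
  lia

section CyclicIsotropic

open krylovSubspace

variable [FiniteDimensional F V] [NeZero (2 : F)] {g : LinearMap.BilinForm F V} {e : End F V}
  {v₁ v₂ : V} {N : ℕ}

theorem pow_apply_mem_of_pow_succ_apply_mem_of_even
    (hdim : finrank F V = 2 * N) (hsymm : g.IsSymm) (hnondeg : g.Nondegenerate)
    (hskew : g.IsSkewAdjoint e) (hnil : e ^ N = 0) (hker : finrank F (ker e) = 2)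
    (hdim₁ : finrank F (krylovSubspace e v₁ N) = N)
    (hdim₂ : finrank F (krylovSubspace e v₂ N) = N)
    (hiso₁ : krylovSubspace e v₁ N ≤ g.orthogonal (krylovSubspace e v₁ N))
    (hiso₂ : krylovSubspace e v₂ N ≤ g.orthogonal (krylovSubspace e v₂ N))
    {n : ℕ} (hn : Even n) (hnN : n + 1 < N)
    (hmem : (e ^ (n + 1)) v₁ ∈ krylovSubspace e v₂ N) : (e ^ n) v₁ ∈ krylovSubspace e v₂ N := by
  obtain ⟨y, hy, hyv⟩ := exists_mem_pow_apply_eq hnil hdim₂ hnN.le hmem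
  have hinv (v : V) : krylovSubspace e v N ∈ e.invtSubmodule :=
    mem_invtSubmodule (by rw [hnil, LinearMap.zero_apply])
  set K₁ := krylovSubspace e v₁ N
  set K₂ := krylovSubspace e v₂ N
  have hv₁ : v₁ ∈ K₁ := pow_apply_mem (k := 0) (by lia)
  have hne : K₁ ⊓ K₂ ≠ ⊥ :=
    Submodule.ne_bot_iff _ |>.2 ⟨_, ⟨pow_apply_mem hnN, hmem⟩, pow_apply_ne_zero hdim₁ hnN⟩
  have hpow : (e ^ (n + 1)) (y - v₁) = 0 := by rw [map_sub, hyv, sub_self]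
  have huker : (e ^ n) (y - v₁) ∈ ker e := by rwa [mem_ker, ← End.mul_apply, ← pow_succ']
  have huu : g (y - v₁) ((e ^ n) (y - v₁)) = 0 :=
    apply_eq_zero_of_mem_ker_pow_of_mem_range_pow hskew hpow
      (ker_le_range_pow hnN (by rw [hdim, hker, mul_comm]) hnil huker)
  have hvu : g v₁ ((e ^ n) (y - v₁)) = 0 :=
    apply_pow_sub_eq_zero_of_even hsymm hskew hn
      (hiso₁ (End.pow_apply_mem_of_forall_mem n (hinv v₁) _ hv₁) _ hv₁)
      (hiso₂ (End.pow_apply_mem_of_forall_mem n (hinv v₂) _ hy) _ hy) huu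
  have huK₁ : (e ^ n) (y - v₁) ∈ K₁ := by
    rw [← orthogonal_eq_self_of_le_of_finrank_eq hnondeg hiso₁ (by rw [hdim, hdim₁])]
    exact mem_orthogonal_krylovSubspace_of_mem_ker hskew N huker hvu
  have huK₂ : (e ^ n) (y - v₁) ∈ K₁ ⊓ K₂ :=
    inf_ker_le_of_finrank_inf_ker_le_one (hinv v₁) finrank_inf_ker_le_one ⟨N, hnil⟩
      (End.invtSubmodule.inf_mem (hinv v₁) (hinv v₂)) inf_le_left hne ⟨huK₁, huker⟩
  rw [← sub_sub_cancel y v₁, map_sub]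
  exact sub_mem (End.pow_apply_mem_of_forall_mem n (hinv v₂) _ hy) huK₂.2

theorem even_intersection_of_maximal_isotropic_cyclic_general
    (hdim : finrank F V = 2 * N) (hsymm : g.IsSymm) (hnondeg : g.Nondegenerate)
    (hskew : g.IsSkewAdjoint e) (hnil : e ^ N = 0) (hker : finrank F (ker e) = 2)
    (hdim₁ : finrank F (krylovSubspace e v₁ N) = N)
    (hdim₂ : finrank F (krylovSubspace e v₂ N) = N)
    (hiso₁ : krylovSubspace e v₁ N ≤ g.orthogonal (krylovSubspace e v₁ N))
    (hiso₂ : krylovSubspace e v₂ N ≤ g.orthogonal (krylovSubspace e v₂ N))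
    (hne : krylovSubspace e v₁ N ⊓ krylovSubspace e v₂ N ≠ ⊥) :
    Even (finrank F ↥(krylovSubspace e v₁ N ⊓ krylovSubspace e v₂ N)) ↔ Even N := by
  have hinv (v : V) : krylovSubspace e v N ∈ e.invtSubmodule :=
    mem_invtSubmodule (by rw [hnil, LinearMap.zero_apply])
  have hmem (n : ℕ) := pow_apply_mem_iff_of_mem_invtSubmodule (n := n) hnil hdim₁
    (End.invtSubmodule.inf_mem (hinv v₁) (hinv v₂)) inf_le_left
  have hle : finrank F ↥(krylovSubspace e v₁ N ⊓ krylovSubspace e v₂ N) ≤ N :=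
    (Submodule.finrank_mono inf_le_left).trans_eq hdim₁
  have hpos := Submodule.one_le_finrank_iff.2 hne
  set d := finrank F ↥(krylovSubspace e v₁ N ⊓ krylovSubspace e v₂ N)
  suffices hcodim : ¬ Odd (N - d) by grind
  rintro ⟨r, hr⟩
  have hstep := pow_apply_mem_of_pow_succ_apply_mem_of_even hdim hsymm hnondeg hskew hnil hker
    hdim₁ hdim₂ hiso₁ hiso₂ (even_two_mul r) (by lia) ((hmem (2 * r + 1)).2 (by lia)).2
  have := (hmem (2 * r)).1 ⟨pow_apply_mem (by lia), hstep⟩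
  lia

end CyclicIsotropic

end NilpotentSkewAdjoint

theorem even_intersection_of_maximal_isotropic_cyclic
    (m : ℕ) (hm : 1 ≤ m)
    (V : Type*) [AddCommGroup V] [Module ℂ V] [FiniteDimensional ℂ V]
    (hdim : Module.finrank ℂ V = 4 * m)
    (g : V →ₗ[ℂ] V →ₗ[ℂ] ℂ)
    (hsymm : ∀ x y : V, g x y = g y x)
    (hnondeg : ∀ v : V, (∀ w : V, g v w = 0) → v = 0)
    (e : Module.End ℂ V)
    (hskew : ∀ x y : V, g (e x) y + g x (e y) = 0)
    (hnil : e ^ (2 * m) = 0)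
    (hker : Module.finrank ℂ (LinearMap.ker e) = 2)
    (v₁ v₂ : V) (K₁ K₂ : Submodule ℂ V)
    (hK₁ : K₁ = Submodule.span ℂ (Set.range fun k : Fin (2 * m) => (e ^ (k : ℕ)) v₁))
    (hK₂ : K₂ = Submodule.span ℂ (Set.range fun k : Fin (2 * m) => (e ^ (k : ℕ)) v₂))
    (hdim₁ : Module.finrank ℂ K₁ = 2 * m)
    (hdim₂ : Module.finrank ℂ K₂ = 2 * m)
    (hiso₁ : ∀ x ∈ K₁, ∀ y ∈ K₁, g x y = 0)
    (hiso₂ : ∀ x ∈ K₂, ∀ y ∈ K₂, g x y = 0) :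
    Even (Module.finrank ℂ ↥(K₁ ⊓ K₂)) := by
  have hsymm' : LinearMap.BilinForm.IsSymm g := ⟨hsymm⟩
  have hnondeg' : g.Nondegenerate := hsymm'.isRefl.nondegenerate_iff_separatingLeft.2 hnondeg
  have hskew' : g.IsSkewAdjoint e := fun x y => by
    rw [Pi.neg_apply, map_neg, eq_neg_of_add_eq_zero_left (hskew x y)]
  obtain hbot | hne := eq_or_ne (K₁ ⊓ K₂) ⊥
  · rw [hbot, finrank_bot]
    exact Even.zero
  · subst hK₁ hK₂
    exact (even_intersection_of_maximal_isotropic_cyclic_general (by lia) hsymm' hnondeg' hskew'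
      hnil hker hdim₁ hdim₂ (fun y hy x hx => hiso₁ x hx y hy) (fun y hy x hx => hiso₂ x hx y hy)
      hne).2 (even_two_mul m)
end

section
/- Let d = [d_1 ≥ d_2 ≥ ⋯ ≥ d_r] be a partition of 2n lying in P_1(2n), i.e., every even value occurs an even number of times among the parts. Then the transpose partition d^t lies in P_{−1}(2n) (every odd value occurs an even number of times among the parts of d^t) — that is, d is special — if and only if the unique block decomposition of d contains no block of type D2 of the form [α_1, β_1, β_1, …, β_k, β_k, α_2] with k ≥ 1; equivalently, if and only if for every i ≥ 1, no even part of d lies strictly between o_{2i} and o_{2i−1}, where o_1 ≥ o_2 ≥ ⋯ ≥ o_{2s} are the odd parts of d listed in weakly decreasing order with multiplicity. -/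
/-!
A value `v ≥ 1` occurs `d v - d (v + 1)` times in the transpose, so `d` is special if and only if
`d v` and `d (v + 1)` have the same parity for every odd `v`. On the other side, all parts between
`o_{2i-1}` and `o_{2i}` are even, and then strictly between them in value, so the second condition
says that `o_{2i-1}` and `o_{2i}` are always adjacent parts of `d`.

If the parities agree, the odd parts fill whole pairs of positions `2 k - 1, 2 k`, which gives
adjacency. Conversely, let the parities of `d v` and `d (v + 1)` differ for an odd `v`. Then
`d (v + 1) < d v`, so an even value occurs among the first `v` parts either with its full
multiplicity or not at all. Hence evenly many of the first `v` parts are even and oddly many are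
odd: the positions of some `o_{2i-1}` and `o_{2i}` lie on either side of the gap between `v` and
`v + 1`. They would have to be `v` and `v + 1` themselves, which contradicts the choice of `v`.
-/

open Finset

section Transpose

/-- The `j`-th part `#{i ∈ [1, r] : d i ≥ j}` of the transpose of the partition `d 1 ≥ ⋯ ≥ d r`.
Parts are indexed from `1`, and the value `d 0` plays no role. -/
def transposePart (d : ℕ → ℕ) (r j : ℕ) : ℕ :=
  #{i ∈ Icc 1 r | j ≤ d i}

variable {d : ℕ → ℕ} {r : ℕ}

lemma le_transposePart_iff (hd : AntitoneOn d (Set.Ici 1)) (hzero : ∀ i, r < i → d i = 0)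
    {v j : ℕ} (hv : 1 ≤ v) (hj : 1 ≤ j) : v ≤ transposePart d r j ↔ j ≤ d v := by
  constructor
  · intro hvj
    obtain ⟨i, hi, hvi⟩ : ∃ i ∈ ({i ∈ Icc 1 r | j ≤ d i} : Finset ℕ), v ≤ i := by
      by_contra! hlt
      have hsub : ({i ∈ Icc 1 r | j ≤ d i} : Finset ℕ) ⊆ Ico 1 v := fun i hi =>
        mem_Ico.2 ⟨(mem_Icc.1 (mem_filter.1 hi).1).1, hlt i hi⟩
      have hcard : transposePart d r j ≤ v - 1 := by
        simpa [transposePart] using card_le_card hsub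
      omega
    exact (mem_filter.1 hi).2.trans (hd hv (hv.trans hvi) hvi)
  · intro hjv
    have hvr : v ≤ r := by
      by_contra! hrv
      have := hzero v hrv
      omega
    have hsub : Icc 1 v ⊆ ({i ∈ Icc 1 r | j ≤ d i} : Finset ℕ) := fun i hi => by
      obtain ⟨h1i, hiv⟩ := mem_Icc.1 hi
      exact mem_filter.2 ⟨mem_Icc.2 ⟨h1i, hiv.trans hvr⟩, hjv.trans (hd h1i hv hiv)⟩
    simpa [transposePart] using card_le_card hsub

lemma transposePart_eq_iff (hd : AntitoneOn d (Set.Ici 1)) (hzero : ∀ i, r < i → d i = 0)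
    {v j : ℕ} (hv : 1 ≤ v) (hj : 1 ≤ j) : transposePart d r j = v ↔ d (v + 1) < j ∧ j ≤ d v := by
  have hle := le_transposePart_iff hd hzero hv hj
  have hlt := le_transposePart_iff hd hzero (Nat.le_add_left 1 v) hj
  omega

lemma card_filter_transposePart_eq (hd : AntitoneOn d (Set.Ici 1))
    (hzero : ∀ i, r < i → d i = 0) {v N : ℕ} (hv : 1 ≤ v) (hN : d v ≤ N) :
    #{j ∈ Icc 1 N | transposePart d r j = v} = d v - d (v + 1) := by
  rw [← Nat.card_Ioc]
  congr 1
  ext j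
  simp only [mem_filter, mem_Icc, mem_Ioc]
  constructor
  · rintro ⟨⟨hj, -⟩, hjv⟩
    exact (transposePart_eq_iff hd hzero hv hj).1 hjv
  · intro hjv
    have hj : 1 ≤ j := Nat.one_le_of_lt hjv.1
    exact ⟨⟨hj, hjv.2.trans hN⟩, (transposePart_eq_iff hd hzero hv hj).2 hjv⟩

lemma even_card_filter_transposePart_eq_iff (hd : AntitoneOn d (Set.Ici 1))
    (hzero : ∀ i, r < i → d i = 0) {v N : ℕ} (hv : 1 ≤ v) (hN : d v ≤ N) :
    Even #{j ∈ Icc 1 N | transposePart d r j = v} ↔ (Odd (d v) ↔ Odd (d (v + 1))) := by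
  rw [card_filter_transposePart_eq hd hzero hv hN,
    Nat.even_sub (hd hv (Nat.le_add_left 1 v) v.le_succ), ← Nat.not_odd_iff_even,
    ← Nat.not_odd_iff_even, not_iff_not]

lemma apply_le_sum_Icc (hzero : ∀ i, r < i → d i = 0) {v : ℕ} (hv : 1 ≤ v) :
    d v ≤ ∑ j ∈ Icc 1 r, d j := by
  rcases le_or_gt v r with hvr | hrv
  · exact single_le_sum (fun i _ => Nat.zero_le (d i)) (mem_Icc.2 ⟨hv, hvr⟩)
  · exact (hzero v hrv).trans_le (Nat.zero_le _)

end Transpose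

section Fibers

variable {ι α : Type*} [DecidableEq α] {f : ι → α} {p : α → Prop} [DecidablePred p]
  {s t : Finset ι}

lemma even_card_filter_of_forall_even_card_fiber (hst : s ⊆ t)
    (hs : ∀ i ∈ s, ∀ j ∈ t, f j = f i → j ∈ s) (ht : ∀ a, p a → Even #{i ∈ t | f i = a}) :
    Even #{i ∈ s | p (f i)} := by
  rw [card_eq_sum_card_image f]
  refine even_sum _ fun a ha => ?_
  obtain ⟨i, hi, rfl⟩ := mem_image.1 ha
  obtain ⟨his, hpi⟩ := mem_filter.1 hi
  have hfiber : {j ∈ {j ∈ s | p (f j)} | f j = f i} = {j ∈ t | f j = f i} := by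
    ext j
    simp only [mem_filter]
    exact ⟨fun ⟨⟨hjs, _⟩, hji⟩ => ⟨hst hjs, hji⟩,
      fun ⟨hjt, hji⟩ => ⟨⟨hs i his j hjt hji, hji ▸ hpi⟩, hji⟩⟩
  rw [hfiber]
  exact ht (f i) hpi

lemma even_card_filter_not_iff_of_forall_even_card_fiber (hst : s ⊆ t)
    (hs : ∀ i ∈ s, ∀ j ∈ t, f j = f i → j ∈ s) (ht : ∀ a, p a → Even #{i ∈ t | f i = a}) :
    Even #{i ∈ s | ¬ p (f i)} ↔ Even #s := by
  rw [← card_filter_add_card_filter_not (s := s) (fun i => p (f i)), Nat.even_add]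
  exact (iff_true_left (even_card_filter_of_forall_even_card_fiber hst hs ht)).symm

end Fibers

section OddRankPair

/-- `a < b` are consecutive positions at which `p` holds, and the number of positions in `[1, a]`
at which `p` holds is odd. For `p j = Odd (d j)` these are the positions of `o_{2i-1}` and
`o_{2i}`, the odd parts of `d` being listed in order. -/
structure IsOddRankPair (p : ℕ → Prop) [DecidablePred p] (a b : ℕ) : Prop where
  one_le : 1 ≤ a
  lt : a < b
  left : p a
  right : p b
  not_between : ∀ c, a < c → c < b → ¬ p c
  odd_rank : Odd #{j ∈ Icc 1 a | p j}

variable {p : ℕ → Prop} [DecidablePred p]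

lemma even_card_filter_Icc_two_mul (hp : ∀ v, Odd v → (p v ↔ p (v + 1))) (k : ℕ) :
    Even #{j ∈ Icc 1 (2 * k) | p j} := by
  induction k with
  | zero => simp
  | succ k ih =>
    have hpair : p (2 * k + 1) ↔ p (2 * k + 1 + 1) := hp _ (odd_two_mul_add_one k)
    rw [card_filter] at ih ⊢
    rw [Nat.mul_succ, sum_Icc_succ_top (by omega), sum_Icc_succ_top (by omega), add_assoc]
    simp only [hpair]
    exact ih.add (Even.add_self _)

lemma IsOddRankPair.eq_add_one {a b : ℕ} (hab : IsOddRankPair p a b)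
    (hp : ∀ v, Odd v → (p v ↔ p (v + 1))) : b = a + 1 := by
  have ha : Odd a := by
    by_contra hodd
    obtain ⟨k, rfl⟩ := even_iff_exists_two_mul.1 (Nat.not_odd_iff_even.1 hodd)
    exact Nat.not_even_iff_odd.2 hab.odd_rank (even_card_filter_Icc_two_mul hp k)
  have hsucc : p (a + 1) := (hp a ha).1 hab.left
  by_contra hne
  exact hab.not_between (a + 1) a.lt_succ_self (by have := hab.lt; omega) hsucc

lemma exists_greatest_of_filter_Icc_nonempty {v : ℕ} (hv : {j ∈ Icc 1 v | p j}.Nonempty) :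
    ∃ a ∈ Icc 1 v, p a ∧ ∀ c, a < c → c ≤ v → ¬ p c := by
  obtain ⟨a, ha, hmax⟩ := exists_max_image _ id hv
  obtain ⟨hav, hpa⟩ := mem_filter.1 ha
  refine ⟨a, hav, hpa, fun c hac hcv hpc => hac.not_ge (hmax c ?_)⟩
  exact mem_filter.2 ⟨mem_Icc.2 ⟨(mem_Icc.1 hav).1.trans hac.le, hcv⟩, hpc⟩

lemma filter_Icc_eq_filter_Icc {a v : ℕ} (hav : a ≤ v) (h : ∀ c, a < c → c ≤ v → ¬ p c) :
    {j ∈ Icc 1 a | p j} = {j ∈ Icc 1 v | p j} := by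
  ext j
  simp only [mem_filter, mem_Icc]
  exact ⟨fun ⟨⟨h1j, hja⟩, hpj⟩ => ⟨⟨h1j, hja.trans hav⟩, hpj⟩,
    fun ⟨⟨h1j, hjv⟩, hpj⟩ => ⟨⟨h1j, not_lt.1 fun haj => h j haj hjv hpj⟩, hpj⟩⟩

lemma exists_isOddRankPair {v r : ℕ} (hvr : v ≤ r) (hv : Odd #{j ∈ Icc 1 v | p j})
    (hr : Even #{j ∈ Icc 1 r | p j}) :
    ∃ a b, IsOddRankPair p a b ∧ a ≤ v ∧ v < b ∧ b ≤ r := by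
  obtain ⟨a, ha, hpa, hlast⟩ := exists_greatest_of_filter_Icc_nonempty (card_pos.1 hv.pos)
  obtain ⟨h1a, hav⟩ := mem_Icc.1 ha
  have hafter : ∃ b, v < b ∧ b ≤ r ∧ p b := by
    by_contra! hnone
    rw [← filter_Icc_eq_filter_Icc hvr hnone] at hr
    exact Nat.not_even_iff_odd.2 hv hr
  obtain ⟨hvb, hbr, hpb⟩ := Nat.find_spec hafter
  refine ⟨a, Nat.find hafter, ⟨h1a, hav.trans_lt hvb, hpa, hpb, fun c hac hcb hpc => ?_, ?_⟩,
    hav, hvb, hbr⟩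
  · rcases le_or_gt c v with hcv | hvc
    · exact hlast c hac hcv hpc
    · exact Nat.find_min hafter hcb ⟨hvc, hcb.le.trans hbr, hpc⟩
  · rwa [filter_Icc_eq_filter_Icc hav hlast]

end OddRankPair

section Parity

variable {d : ℕ → ℕ} {r : ℕ}

lemma IsOddRankPair.forall_not_even_between_iff (hd : AntitoneOn d (Set.Ici 1)) {a b : ℕ}
    (hab : IsOddRankPair (fun j => Odd (d j)) a b) (hbr : b ≤ r) :
    (∀ c, 1 ≤ c → c ≤ r → Even (d c) → ¬ (d b < d c ∧ d c < d a)) ↔ b = a + 1 := by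
  have h1a := hab.one_le
  constructor
  · intro hnone
    by_contra hne
    have h1c : 1 ≤ a + 1 := Nat.le_add_left 1 a
    have hcb : a + 1 < b := lt_of_le_of_ne hab.lt (Ne.symm hne)
    have hc : Even (d (a + 1)) := Nat.not_odd_iff_even.1 (hab.not_between _ a.lt_succ_self hcb)
    refine hnone (a + 1) h1c (hcb.le.trans hbr) hc ⟨?_, ?_⟩
    · refine (hd h1c (h1c.trans hcb.le) hcb.le).lt_of_ne fun h => ?_
      exact Nat.not_even_iff_odd.2 hab.right (h ▸ hc)
    · refine (hd h1a h1c a.le_succ).lt_of_ne fun h => ?_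
      exact Nat.not_even_iff_odd.2 hab.left (h ▸ hc)
  · rintro rfl c h1c - - ⟨hbc, hca⟩
    have hcb : c < a + 1 := hd.reflect_lt (Nat.le_add_left 1 a) h1c hbc
    have hac : a < c := hd.reflect_lt h1c h1a hca
    omega

lemma even_card_filter_odd_Icc_iff_of_lt (hd : AntitoneOn d (Set.Ici 1))
    (hP1 : ∀ w, Even w → Even #{j ∈ Icc 1 r | d j = w}) {v : ℕ} (hvr : v ≤ r)
    (hlt : d (v + 1) < d v) : Even #{j ∈ Icc 1 v | Odd (d j)} ↔ Even v := by
  have hclosed : ∀ i ∈ Icc 1 v, ∀ j ∈ Icc 1 r, d j = d i → j ∈ Icc 1 v := by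
    intro i hi j hj hji
    obtain ⟨h1i, hiv⟩ := mem_Icc.1 hi
    refine mem_Icc.2 ⟨(mem_Icc.1 hj).1, not_lt.1 fun hvj => ?_⟩
    have hdj : d j ≤ d (v + 1) := hd (Nat.le_add_left 1 v) (mem_Icc.1 hj).1 hvj
    have hdi : d v ≤ d i := hd h1i (h1i.trans hiv) hiv
    omega
  simpa using even_card_filter_not_iff_of_forall_even_card_fiber
    (Icc_subset_Icc_right hvr) hclosed hP1

lemma forall_odd_iff_odd_succ_iff_forall_eq_add_one (hd : AntitoneOn d (Set.Ici 1))
    (hzero : ∀ i, r < i → d i = 0) (hP1 : ∀ w, Even w → Even #{j ∈ Icc 1 r | d j = w})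
    (hodd : Even #{j ∈ Icc 1 r | Odd (d j)}) :
    (∀ v, Odd v → (Odd (d v) ↔ Odd (d (v + 1)))) ↔
      ∀ a b, IsOddRankPair (fun j => Odd (d j)) a b → b ≤ r → b = a + 1 := by
  refine ⟨fun hparity a b hab _ => hab.eq_add_one hparity, fun hadj v hv => ?_⟩
  by_contra hne
  have hlt : d (v + 1) < d v :=
    (hd hv.pos (Nat.le_add_left 1 v) v.le_succ).lt_of_ne fun h => hne (by rw [h])
  have hvr : v ≤ r := by
    by_contra! hrv
    have := hzero v hrv
    omega
  have hrank : Odd #{j ∈ Icc 1 v | Odd (d j)} := by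
    rwa [← Nat.not_even_iff_odd, even_card_filter_odd_Icc_iff_of_lt hd hP1 hvr hlt,
      Nat.not_even_iff_odd]
  obtain ⟨a, b, hab, hav, hvb, hbr⟩ := exists_isOddRankPair hvr hrank hodd
  obtain rfl : b = a + 1 := hadj a b hab hbr
  obtain rfl : v = a := by omega
  exact hne (iff_of_true hab.left hab.right)

end Parity

theorem typeD_partition_special_iff
    (n r : ℕ) (hn : 1 ≤ n)
    (d : ℕ → ℕ)
    (hanti : ∀ i j : ℕ, 1 ≤ i → i ≤ j → d j ≤ d i)
    (hpos : ∀ j, 1 ≤ j → j ≤ r → 0 < d j)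
    (hzero : ∀ j, r < j → d j = 0)
    (hsum : ∑ j ∈ Finset.Icc 1 r, d j = 2 * n)
    (hP1 : ∀ v : ℕ, Even v →
      Even (((Finset.Icc 1 r).filter (fun j => d j = v)).card)) :
    -- `d` is special, i.e. `dᵗ ∈ P₋₁(2n)`: every odd value occurs an even number of
    -- times among the parts `(dᵗ)_j = #{i ∈ [1,r] : d_i ≥ j}` of the transpose ...
    ((∀ v : ℕ, Odd v →
      Even (((Finset.Icc 1 (2 * n)).filter
        (fun j => ((Finset.Icc 1 r).filter (fun i => j ≤ d i)).card = v)).card))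
    ↔
    -- ... iff no even part lies strictly between `o_{2i}` and `o_{2i-1}` (no type D2
    -- block with `k ≥ 1` occurs in the block decomposition of `d`):
    (∀ a b : ℕ, 1 ≤ a → a < b → b ≤ r → Odd (d a) → Odd (d b) →
      (∀ c, a < c → c < b → Even (d c)) →
      Odd (((Finset.Icc 1 a).filter (fun j => Odd (d j))).card) →
      ∀ c, 1 ≤ c → c ≤ r → Even (d c) → ¬(d b < d c ∧ d c < d a))) := by
  
  have hd : AntitoneOn d (Set.Ici 1) := fun i hi j _ hij => hanti i j hi hij
  have hodd : Even #{j ∈ Icc 1 r | Odd (d j)} := by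
    rw [← even_sum_iff_even_card_odd, hsum]
    exact even_two_mul n
  have hspecial (v : ℕ) (hv : Odd v) :
      Even #{j ∈ Icc 1 (2 * n) | transposePart d r j = v} ↔ (Odd (d v) ↔ Odd (d (v + 1))) :=
    even_card_filter_transposePart_eq_iff hd hzero hv.pos (hsum ▸ apply_le_sum_Icc hzero hv.pos)
  refine (forall₂_congr hspecial).trans <|
    (forall_odd_iff_odd_succ_iff_forall_eq_add_one hd hzero hP1 hodd).trans ?_
  constructor
  · intro hadj a b h1a hlt hbr hda hdb hbetween hrank
    have hab : IsOddRankPair (fun j => Odd (d j)) a b :=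
      ⟨h1a, hlt, hda, hdb, fun c hac hcb => Nat.not_odd_iff_even.2 (hbetween c hac hcb), hrank⟩
    exact (hab.forall_not_even_between_iff hd hbr).2 (hadj a b hab hbr)
  · intro hnone a b hab hbr
    refine (hab.forall_not_even_between_iff hd hbr).1 ?_
    exact hnone a b hab.one_le hab.lt hbr hab.left hab.right
      (fun c hac hcb => Nat.not_odd_iff_even.1 (hab.not_between c hac hcb)) hab.odd_rank
end

section
/- Let m ≥ 0, let p_1,…,p_m ≥ 1 be integers, and let q ≥ 0 be an even integer with q ≠ 2, such that 2(p_1 + ⋯ + p_m) + q = 2n. Define the partition d′ of 2n by d′_j = 2·#{1 ≤ i ≤ m : p_i ≥ j} + (1 if 1 ≤ j ≤ q, else 0) for j ≥ 1, and let d = (d′)_D ∈ P_1(2n) be the D-collapse of d′. Then the block decomposition of d contains no block of type D2 of the form [α_1, β_1, β_1, …, β_k, β_k, α_2] with k ≥ 1; equivalently, for every i ≥ 1 no even part of d lies strictly between the (2i)-th and the (2i−1)-th largest odd parts of d. Consequently, every block of d consists of exactly two parts, and the number of parts of d is even. -/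
/-!
Statement 10 (item 1 of the paper's Lemma on the structure of Richardson partitions in
type D): Let `m ≥ 0`, `p₁, …, p_m ≥ 1`, and `q ≥ 0` even with `q ≠ 2`, such that
`2(p₁ + ⋯ + p_m) + q = 2n`.  Define the induced partition `d′` of `2n` by
`d′_j = 2·#{i ∈ [1,m] : p_i ≥ j} + [1 ≤ j ≤ q]`, and let `d = (d′)_D ∈ P₁(2n)` be its
D-collapse.  Then the block decomposition of `d` contains no type D2 block
`[α₁, β₁, β₁, …, β_k, β_k, α₂]` with `k ≥ 1`; equivalently, no even part of `d` lies
strictly between the `2i`-th and the `(2i-1)`-st largest odd parts of `d`.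
Consequently every block of `d` has exactly two parts and the number `r` of parts of
`d` is even.

Here the D-collapse is formalized through its standard characterization: `(d′)_D` is
the unique partition in `P₁(2n)` which is dominated by `d′` and dominates every
partition in `P₁(2n)` dominated by `d′` (dominance = all partial sums `≤`).  The
"no type D2 block with `k ≥ 1`" condition is formalized by its stated equivalent:
for all positions `a < b` of odd parts with no odd part strictly between them and
with `d a` of odd rank among the odd parts (so `d a = o_{2i-1}`, `d b = o_{2i}`),
no even part lies strictly between `d b` and `d a`.
-/

/-!
Because `q` is even, the parts of `d'` in positions `2t + 1` and `2t + 2` have the same parity, so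
`d'` can be collapsed one pair at a time: an even pair `x > y` becomes the odd pair
`x - 1`, `y + 1`. The outcome lies in `P₁` and has the same partial sums as `d'` at even positions,
so maximality of the D-collapse `d` forces the partial sums of `d` at even positions to agree with
those of `d'`; in particular they are even. On the other hand, a partial sum of a member of `P₁` up
to a descent `d (k + 1) < d k` has the parity of `k`, since the even parts before it come in pairs.
For `k = 2t + 1` this makes both parts of an unequal pair odd.
-/

open Finset

/-- `d 1 ≥ d 2 ≥ ⋯` is a partition of `N` with exactly `r` parts, as a sequence indexed from `1` and
extended by zeros; the value `d 0` is irrelevant. -/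
structure IsPartition (N r : ℕ) (d : ℕ → ℕ) : Prop where
  antitoneOn : AntitoneOn d (Set.Ici 1)
  pos : ∀ j, 1 ≤ j → j ≤ r → 0 < d j
  zero : ∀ j, r < j → d j = 0
  sum_eq : ∑ j ∈ Icc 1 r, d j = N

/-- Membership in `P₁(N)`: every even value occurs an even number of times. -/
structure IsDPartition (N r : ℕ) (d : ℕ → ℕ) : Prop extends IsPartition N r d where
  even_card : ∀ v, Even v → Even #{j ∈ Icc 1 r | d j = v}

/-- The dominance order on partitions, compared through partial sums. -/
def DominatedBy (c d : ℕ → ℕ) : Prop :=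
  ∀ k, ∑ j ∈ Icc 1 k, c j ≤ ∑ j ∈ Icc 1 k, d j

/-- `d` is the D-collapse of `d'`, encoded as the greatest element of `P₁(N)` dominated by `d'`. -/
structure IsDCollapse (N r : ℕ) (d' d : ℕ → ℕ) : Prop extends IsDPartition N r d where
  dominatedBy : DominatedBy d d'
  greatest : ∀ c rc, IsDPartition N rc c → DominatedBy c d' → DominatedBy c d

/-- Every block of `d` has two parts: it is `[x, x]` or `[α₁, α₂]` with `α₁`, `α₂` odd, so that the
blocks occupy the positions `2t + 1`, `2t + 2`. -/
def HasTwoPartBlocks (d : ℕ → ℕ) : Prop :=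
  ∀ t, d (2 * t + 1) = d (2 * t + 2) ∨ Odd (d (2 * t + 1)) ∧ Odd (d (2 * t + 2))

/-- No block `[α₁, β₁, β₁, …, β_k, β_k, α₂]` with `k ≥ 1` occurs among the first `r` parts of `d`:
consecutive odd parts `d a`, `d b`, the first of odd rank among the odd parts, have no even part
strictly between them. -/
def NoLongD2Block (r : ℕ) (d : ℕ → ℕ) : Prop :=
  ∀ a b : ℕ, 1 ≤ a → a < b → b ≤ r → Odd (d a) → Odd (d b) →
    (∀ c, a < c → c < b → Even (d c)) → Odd #{j ∈ Icc 1 a | Odd (d j)} →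
    ∀ c, 1 ≤ c → c ≤ r → Even (d c) → ¬(d b < d c ∧ d c < d a)

theorem sum_Icc_one_two_mul {M : Type*} [AddCommMonoid M] (f : ℕ → M) (t : ℕ) :
    ∑ j ∈ Icc 1 (2 * t), f j = ∑ s ∈ range t, (f (2 * s + 1) + f (2 * s + 2)) := by
  induction t with
  | zero => simp
  | succ t ih =>
    rw [sum_range_succ, ← ih, ← add_assoc, mul_add_one, sum_Icc_succ_top (by omega),
      sum_Icc_succ_top (by omega)]

theorem even_sum_Icc_one_two_mul {d : ℕ → ℕ} (h : ∀ t, Even (d (2 * t + 1) + d (2 * t + 2)))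
    (t : ℕ) : Even (∑ j ∈ Icc 1 (2 * t), d j) := by
  rw [sum_Icc_one_two_mul]
  exact even_sum _ fun s _ => h s

theorem exists_isPartition_of_antitoneOn {d : ℕ → ℕ} (hd : AntitoneOn d (Set.Ici 1)) {R : ℕ}
    (hR : d (R + 1) = 0) : ∃ r, IsPartition (∑ j ∈ Icc 1 R, d j) r d := by
  have hex : ∃ k, d (k + 1) = 0 := ⟨R, hR⟩
  have hzero : ∀ j, Nat.find hex < j → d j = 0 := fun j hj =>
    Nat.eq_zero_of_le_zero <| (Nat.find_spec hex) ▸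
      hd (Set.mem_Ici.2 (by omega)) (Set.mem_Ici.2 (by omega)) hj
  refine ⟨Nat.find hex, hd, fun j hj hjr => ?_, hzero, ?_⟩
  · have hne := Nat.find_min hex (m := j - 1) (by omega)
    rw [Nat.sub_add_cancel hj] at hne
    exact Nat.pos_of_ne_zero hne
  · refine sum_subset (Icc_subset_Icc_right (Nat.find_min' hex hR)) fun j hj hj' => hzero j ?_
    rw [mem_Icc] at hj hj'
    omega

namespace IsDPartition

variable {N r k : ℕ} {d : ℕ → ℕ}

theorem even_card_even_of_descent (hd : IsDPartition N r d) (hk : d (k + 1) < d k) :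
    Even #{j ∈ Icc 1 k | Even (d j)} := by
  have hkr : k ≤ r := by
    by_contra! h
    have := hd.zero k h
    omega
  rw [card_eq_sum_card_image d]
  refine even_sum _ fun v hv => ?_
  obtain ⟨i, hi, rfl⟩ := mem_image.1 hv
  rw [mem_filter, mem_Icc] at hi
  suffices {j ∈ {j ∈ Icc 1 k | Even (d j)} | d j = d i} = {j ∈ Icc 1 r | d j = d i} from
    this ▸ hd.even_card (d i) hi.2
  ext j
  simp only [mem_filter, mem_Icc]
  refine ⟨fun ⟨⟨hj, _⟩, hji⟩ => ⟨⟨hj.1, hj.2.trans hkr⟩, hji⟩, fun ⟨hj, hji⟩ => ?_⟩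
  refine ⟨⟨⟨hj.1, ?_⟩, hji ▸ hi.2⟩, hji⟩
  by_contra! hkj
  have hj_le : d j ≤ d (k + 1) := hd.antitoneOn (Set.mem_Ici.2 (by omega)) hj.1 hkj
  have hk_le : d k ≤ d i := hd.antitoneOn hi.1.1 (hi.1.1.trans hi.1.2) hi.1.2
  omega

theorem even_sum_iff_of_descent (hd : IsDPartition N r d) (hk : d (k + 1) < d k) :
    Even (∑ j ∈ Icc 1 k, d j) ↔ Even k := by
  have hcard := card_filter_add_card_filter_not (s := Icc 1 k) (fun j => Even (d j))
  simp only [Nat.not_even_iff_odd, Nat.card_Icc, Nat.add_sub_cancel] at hcard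
  have heven := hd.even_card_even_of_descent hk
  rw [even_sum_iff_even_card_odd]
  nth_rw 2 [← hcard]
  rw [Nat.even_add, iff_true_left heven]

theorem hasTwoPartBlocks_of_even_sum (hd : IsDPartition N r d)
    (heven : ∀ t, Even (∑ j ∈ Icc 1 (2 * t), d j)) : HasTwoPartBlocks d := by
  intro t
  rcases (hd.antitoneOn (Set.mem_Ici.2 (by omega)) (Set.mem_Ici.2 (by omega))
    (Nat.le_succ (2 * t + 1))).eq_or_lt with heq | hlt
  · exact .inl heq.symm
  · have hsum : ¬Even (∑ j ∈ Icc 1 (2 * t + 1), d j) := by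
      simp [hd.even_sum_iff_of_descent hlt]
    have hnext := heven (t + 1)
    rw [mul_add_one, sum_Icc_succ_top (by omega), Nat.even_add, iff_false_left hsum] at hnext
    rw [sum_Icc_succ_top (by omega), Nat.even_add, iff_true_left (heven t)] at hsum
    exact .inr ⟨Nat.not_even_iff_odd.1 hsum, Nat.not_even_iff_odd.1 hnext⟩

end IsDPartition

namespace HasTwoPartBlocks

variable {d : ℕ → ℕ}

theorem even_add (h : HasTwoPartBlocks d) (t : ℕ) : Even (d (2 * t + 1) + d (2 * t + 2)) := by
  rcases h t with heq | ⟨h₁, h₂⟩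
  · exact heq ▸ Even.add_self _
  · exact h₁.add_odd h₂

theorem even_card (h : HasTwoPartBlocks d) {v : ℕ} (hv : Even v) (t : ℕ) :
    Even #{j ∈ Icc 1 (2 * t) | d j = v} := by
  rw [card_filter]
  refine even_sum_Icc_one_two_mul (fun s => ?_) t
  rcases h s with heq | ⟨h₁, h₂⟩
  · exact heq ▸ Even.add_self _
  · have hne : ∀ {x}, Odd x → x ≠ v := fun hx hxv => Nat.not_even_iff_odd.2 hx (hxv ▸ hv)
    simp [hne h₁, hne h₂]

theorem isDPartition (h : HasTwoPartBlocks d) {N r : ℕ} (hd : IsPartition N r d) :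
    IsDPartition N r d := by
  refine ⟨hd, fun v hv => ?_⟩
  rcases eq_or_ne v 0 with rfl | hv0
  · rw [filter_eq_empty_iff.2 fun j hj => (hd.pos j (mem_Icc.1 hj).1 (mem_Icc.1 hj).2).ne']
    simp
  · suffices {j ∈ Icc 1 r | d j = v} = {j ∈ Icc 1 (2 * r) | d j = v} from
      this ▸ h.even_card hv r
    ext j
    have := hd.zero j
    simp only [mem_filter, mem_Icc]
    omega

theorem noLongD2Block (h : HasTwoPartBlocks d) (hd : AntitoneOn d (Set.Ici 1)) (r : ℕ) :
    NoLongD2Block r d := by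
  rintro a b ha hab - hda - hbetween hrank x hx - - ⟨hbx, hxa⟩
  rw [← odd_sum_iff_odd_card_odd] at hrank
  obtain ⟨t, rfl | rfl⟩ := Nat.even_or_odd' a
  · exact Nat.not_even_iff_odd.2 hrank (even_sum_Icc_one_two_mul h.even_add t)
  · have hodd : Odd (d (2 * t + 2)) := by
      rcases h t with heq | ⟨-, hodd⟩
      exacts [heq ▸ hda, hodd]
    obtain rfl : b = 2 * t + 2 := by
      by_contra hne
      exact Nat.not_even_iff_odd.2 hodd (hbetween _ (by omega) (by omega))
    rcases Nat.lt_or_ge (2 * t + 1) x with hax | hxa'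
    · exact hbx.not_ge (hd (Set.mem_Ici.2 (by omega)) hx hax)
    · exact hxa.not_ge (hd hx ha hxa')

theorem even_length (h : HasTwoPartBlocks d) {N r : ℕ} (hd : IsPartition N r d) : Even r := by
  by_contra hr
  obtain ⟨t, rfl⟩ := Nat.not_even_iff_odd.1 hr
  have hpos := hd.pos (2 * t + 1) (by omega) le_rfl
  have hzero := hd.zero (2 * t + 2) (by omega)
  rcases h t with heq | ⟨-, hodd⟩
  · omega
  · simp [hzero] at hodd

end HasTwoPartBlocks

/-- Replaces each pair `d (2t + 1) > d (2t + 2)` with `d (2t + 1)` even by `d (2t + 1) - 1`,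
`d (2t + 2) + 1`; this is the D-collapse when the two parts of each pair have the same parity. -/
def pairCollapse (d : ℕ → ℕ) (j : ℕ) : ℕ :=
  if Odd j then
    if Even (d j) ∧ d (j + 1) < d j then d j - 1 else d j
  else
    if Even (d (j - 1)) ∧ d j < d (j - 1) then d j + 1 else d j

section pairCollapse

variable (d : ℕ → ℕ) (t : ℕ)

theorem pairCollapse_two_mul_add_one :
    pairCollapse d (2 * t + 1) =
      if Even (d (2 * t + 1)) ∧ d (2 * t + 2) < d (2 * t + 1) then d (2 * t + 1) - 1
      else d (2 * t + 1) :=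
  if_pos (odd_two_mul_add_one t)

theorem pairCollapse_two_mul_add_two :
    pairCollapse d (2 * t + 2) =
      if Even (d (2 * t + 1)) ∧ d (2 * t + 2) < d (2 * t + 1) then d (2 * t + 2) + 1
      else d (2 * t + 2) :=
  if_neg (Nat.not_odd_iff_even.2 (even_two_mul (t + 1)))

theorem pairCollapse_two_mul_add_one_le :
    pairCollapse d (2 * t + 1) ≤ d (2 * t + 1) := by
  rw [pairCollapse_two_mul_add_one]
  split_ifs <;> omega

theorem le_pairCollapse_two_mul_add_two :
    d (2 * t + 2) ≤ pairCollapse d (2 * t + 2) := by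
  rw [pairCollapse_two_mul_add_two]
  split_ifs <;> omega

theorem sum_Icc_two_mul_pairCollapse :
    ∑ j ∈ Icc 1 (2 * t), pairCollapse d j = ∑ j ∈ Icc 1 (2 * t), d j := by
  simp only [sum_Icc_one_two_mul]
  refine sum_congr rfl fun s _ => ?_
  rw [pairCollapse_two_mul_add_one, pairCollapse_two_mul_add_two]
  split_ifs <;> omega

theorem pairCollapse_dominatedBy : DominatedBy (pairCollapse d) d := by
  intro k
  obtain ⟨t, rfl | rfl⟩ := Nat.even_or_odd' k
  · exact (sum_Icc_two_mul_pairCollapse d t).le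
  · rw [sum_Icc_succ_top (by omega), sum_Icc_succ_top (by omega), sum_Icc_two_mul_pairCollapse]
    exact Nat.add_le_add_left (pairCollapse_two_mul_add_one_le d t) _

variable {d}

theorem hasTwoPartBlocks_pairCollapse (hd : AntitoneOn d (Set.Ici 1))
    (heven : ∀ t, Even (d (2 * t + 1) + d (2 * t + 2))) : HasTwoPartBlocks (pairCollapse d) := by
  intro t
  have hle : d (2 * t + 2) ≤ d (2 * t + 1) :=
    hd (Set.mem_Ici.2 (by omega)) (Set.mem_Ici.2 (by omega)) (Nat.le_succ _)
  have := heven t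
  rw [pairCollapse_two_mul_add_one, pairCollapse_two_mul_add_two]
  grind

theorem antitoneOn_pairCollapse (hd : AntitoneOn d (Set.Ici 1))
    (heven : ∀ t, Even (d (2 * t + 1) + d (2 * t + 2))) :
    AntitoneOn (pairCollapse d) (Set.Ici 1) := by
  refine antitoneOn_nat_Ici_of_succ_le fun j hj => ?_
  have hle : d (j + 1) ≤ d j := hd hj (Set.mem_Ici.2 (by omega)) (Nat.le_succ j)
  obtain ⟨t, rfl | rfl⟩ := Nat.even_or_odd' j
  · obtain ⟨s, rfl⟩ := Nat.exists_eq_add_of_le' (show 1 ≤ t by omega)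
    exact (pairCollapse_two_mul_add_one_le d (s + 1)).trans
      (hle.trans (le_pairCollapse_two_mul_add_two d s))
  · -- An even pair `x > y` of equal parity has `y + 2 ≤ x`.
    have := heven t
    rw [pairCollapse_two_mul_add_one, pairCollapse_two_mul_add_two]
    grind

theorem exists_isDPartition_pairCollapse {N r : ℕ} (hd : IsPartition N r d)
    (heven : ∀ t, Even (d (2 * t + 1) + d (2 * t + 2))) :
    ∃ rc, IsDPartition N rc (pairCollapse d) := by
  have hzero : pairCollapse d (2 * r + 1) = 0 :=
    Nat.eq_zero_of_le_zero <|
      (pairCollapse_two_mul_add_one_le d r).trans (hd.zero _ (by omega)).le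
  have hsum : ∑ j ∈ Icc 1 (2 * r), pairCollapse d j = N := by
    rw [sum_Icc_two_mul_pairCollapse, ← hd.sum_eq]
    refine (sum_subset (Icc_subset_Icc_right (by omega)) fun j hj hj' => hd.zero j ?_).symm
    rw [mem_Icc] at hj hj'
    omega
  obtain ⟨rc, hrc⟩ :=
    exists_isPartition_of_antitoneOn (antitoneOn_pairCollapse hd.antitoneOn heven) hzero
  exact ⟨rc, (hasTwoPartBlocks_pairCollapse hd.antitoneOn heven).isDPartition (hsum ▸ hrc)⟩

end pairCollapse

theorem IsDCollapse.hasTwoPartBlocks {N r r' : ℕ} {d' d : ℕ → ℕ} (hd : IsDCollapse N r d' d)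
    (hd' : IsPartition N r' d') (heven : ∀ t, Even (d' (2 * t + 1) + d' (2 * t + 2))) :
    HasTwoPartBlocks d := by
  obtain ⟨rc, hc⟩ := exists_isDPartition_pairCollapse hd' heven
  have hcd := hd.greatest _ rc hc (pairCollapse_dominatedBy d')
  refine hd.toIsDPartition.hasTwoPartBlocks_of_even_sum fun t => ?_
  have hsum : ∑ j ∈ Icc 1 (2 * t), d j = ∑ j ∈ Icc 1 (2 * t), d' j :=
    (hd.dominatedBy _).antisymm (sum_Icc_two_mul_pairCollapse d' t ▸ hcd (2 * t))
  exact hsum ▸ even_sum_Icc_one_two_mul heven t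

/-- The partition induced from a parabolic subalgebra of `so` with Levi type
`⨁_{i ∈ s} gl_{p i} ⊕ so_q`. -/
def inducedPartition {ι : Type*} (s : Finset ι) (p : ι → ℕ) (q j : ℕ) : ℕ :=
  2 * #{i ∈ s | j ≤ p i} + if 1 ≤ j ∧ j ≤ q then 1 else 0

section inducedPartition

variable {ι : Type*} (s : Finset ι) (p : ι → ℕ)

theorem antitoneOn_inducedPartition (q : ℕ) :
    AntitoneOn (inducedPartition s p q) (Set.Ici 1) := by
  intro j hj k _ hjk
  rw [Set.mem_Ici] at hj
  have hcard : #{i ∈ s | k ≤ p i} ≤ #{i ∈ s | j ≤ p i} :=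
    card_le_card (monotone_filter_right s fun _ _ => hjk.trans)
  unfold inducedPartition
  split_ifs <;> omega

theorem even_inducedPartition_add {q : ℕ} (hq : Even q) (t : ℕ) :
    Even (inducedPartition s p q (2 * t + 1) + inducedPartition s p q (2 * t + 2)) := by
  unfold inducedPartition
  grind

theorem sum_Icc_inducedPartition {q R : ℕ} (hp : ∀ i ∈ s, p i ≤ R) (hq : q ≤ R) :
    ∑ j ∈ Icc 1 R, inducedPartition s p q j = 2 * ∑ i ∈ s, p i + q := by
  have card_Icc_filter_le : ∀ x ≤ R, #{j ∈ Icc 1 R | j ≤ x} = x := fun x hx => by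
    rw [show {j ∈ Icc 1 R | j ≤ x} = Icc 1 x by ext; simp only [mem_filter, mem_Icc]; omega]
    simp
  have hgl : ∑ j ∈ Icc 1 R, #{i ∈ s | j ≤ p i} = ∑ i ∈ s, p i :=
    (sum_card_bipartiteAbove_eq_sum_card_bipartiteBelow fun j i => j ≤ p i).trans
      (sum_congr rfl fun i hi => card_Icc_filter_le (p i) (hp i hi))
  have hso : ∑ j ∈ Icc 1 R, (if 1 ≤ j ∧ j ≤ q then 1 else 0) = q := by
    rw [← card_filter]
    refine Eq.trans (congrArg card (filter_congr fun j hj => ?_)) (card_Icc_filter_le q hq)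
    exact and_iff_right (mem_Icc.1 hj).1
  simp only [inducedPartition, sum_add_distrib, ← mul_sum, hgl, hso]

theorem exists_isPartition_inducedPartition (q : ℕ) :
    ∃ r, IsPartition (2 * ∑ i ∈ s, p i + q) r (inducedPartition s p q) := by
  have hp : ∀ i ∈ s, p i ≤ ∑ i ∈ s, p i + q := fun i hi =>
    (single_le_sum_of_canonicallyOrdered hi).trans (Nat.le_add_right _ _)
  rw [← sum_Icc_inducedPartition s p hp (Nat.le_add_left _ _)]
  refine exists_isPartition_of_antitoneOn (antitoneOn_inducedPartition s p q) ?_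
  have hempty : {i ∈ s | ∑ i ∈ s, p i + q + 1 ≤ p i} = ∅ :=
    filter_eq_empty_iff.2 fun i hi => (Nat.lt_succ_of_le (hp i hi)).not_ge
  rw [inducedPartition, hempty, if_neg (by omega), card_empty]

end inducedPartition

theorem richardson_partition_no_long_D2_block_general {N r r' : ℕ} {d' d : ℕ → ℕ}
    (hd' : IsPartition N r' d') (heven : ∀ t, Even (d' (2 * t + 1) + d' (2 * t + 2)))
    (hd : IsDCollapse N r d' d) : NoLongD2Block r d ∧ Even r :=
  have hblocks := hd.hasTwoPartBlocks hd' heven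
  ⟨hblocks.noLongD2Block hd.antitoneOn r, hblocks.even_length hd.toIsPartition⟩

theorem richardson_partition_no_long_D2_block
    (n m q : ℕ) (hn : 1 ≤ n)
    (p : ℕ → ℕ) (hp : ∀ i, 1 ≤ i → i ≤ m → 1 ≤ p i)
    (hq : Even q) (hq2 : q ≠ 2)
    (htotal : 2 * (∑ i ∈ Finset.Icc 1 m, p i) + q = 2 * n)
    (d' : ℕ → ℕ)
    (hd' : ∀ j, d' j =
      2 * (((Finset.Icc 1 m).filter (fun i => j ≤ p i)).card)
        + (if 1 ≤ j ∧ j ≤ q then 1 else 0))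
    (r : ℕ) (d : ℕ → ℕ)
    -- `d` is a partition of `2n` with `r` parts, lying in `P₁(2n) ...`
    (hanti : ∀ i j : ℕ, 1 ≤ i → i ≤ j → d j ≤ d i)
    (hpos : ∀ j, 1 ≤ j → j ≤ r → 0 < d j)
    (hzero : ∀ j, r < j → d j = 0)
    (hsum : ∑ j ∈ Finset.Icc 1 r, d j = 2 * n)
    (hP1 : ∀ v : ℕ, Even v →
      Even (((Finset.Icc 1 r).filter (fun j => d j = v)).card))
    -- ... dominated by `d′` ...
    (hdom : ∀ k, ∑ j ∈ Finset.Icc 1 k, d j ≤ ∑ j ∈ Finset.Icc 1 k, d' j)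
    -- ... and maximal among partitions of `2n` in `P₁(2n)` dominated by `d′`;
    -- this characterizes the D-collapse `d = (d′)_D`:
    (hmax : ∀ (c : ℕ → ℕ) (rc : ℕ),
      (∀ i j : ℕ, 1 ≤ i → i ≤ j → c j ≤ c i) →
      (∀ j, 1 ≤ j → j ≤ rc → 0 < c j) →
      (∀ j, rc < j → c j = 0) →
      (∑ j ∈ Finset.Icc 1 rc, c j = 2 * n) →
      (∀ v : ℕ, Even v →
        Even (((Finset.Icc 1 rc).filter (fun j => c j = v)).card)) →
      (∀ k, ∑ j ∈ Finset.Icc 1 k, c j ≤ ∑ j ∈ Finset.Icc 1 k, d' j) →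
      (∀ k, ∑ j ∈ Finset.Icc 1 k, c j ≤ ∑ j ∈ Finset.Icc 1 k, d j)) :
    -- conclusion: no even part of `d` lies strictly between `o_{2i}` and `o_{2i-1}`
    -- (no type D2 block with `k ≥ 1`), ...
    (∀ a b : ℕ, 1 ≤ a → a < b → b ≤ r → Odd (d a) → Odd (d b) →
      (∀ c, a < c → c < b → Even (d c)) →
      Odd (((Finset.Icc 1 a).filter (fun j => Odd (d j))).card) →
      ∀ c, 1 ≤ c → c ≤ r → Even (d c) → ¬(d b < d c ∧ d c < d a))
    -- ... and consequently (every block having exactly two parts) the number of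
    -- parts of `d` is even:
    ∧ Even r := by
  obtain rfl : d' = inducedPartition (Icc 1 m) p q := funext hd'
  obtain ⟨r', hd'⟩ := exists_isPartition_inducedPartition (Icc 1 m) p q
  exact richardson_partition_no_long_D2_block_general (htotal ▸ hd')
    (even_inducedPartition_add _ p hq)
    { antitoneOn := fun i hi j _ hij => hanti i j hi hij
      pos := hpos
      zero := hzero
      sum_eq := hsum
      even_card := hP1
      dominatedBy := hdom
      greatest := fun c rc hc => hmax c rc
        (fun i j hi hij => hc.antitoneOn hi (hi.trans hij) hij) hc.pos hc.zero hc.sum_eq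
        hc.even_card }
end
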